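/- arXiv:2207.11799 — 10 statements merged into one kernel-verified Lean document; each statement's English description precedes it below -/
import Mathlib

section
/- Let (g,B) be a Buscher pair of size (s,n). Then Q_fib = g_fib is invertible, and the symmetric and antisymmetric parts ĝ := (Q̂ + Q̂ᵀ)/2 and B̂ := (Q̂ − Q̂ᵀ)/2 of the dual matrix Q̂ are given blockwise by ĝ_bas = g_bas − g_mix g_fib⁻¹ g_mixᵀ + B_mix g_fib⁻¹ B_mixᵀ, ĝ_mix = B_mix g_fib⁻¹, ĝ_fib = g_fib⁻¹, B̂_bas = B_bas − B_mix g_fib⁻¹ g_mixᵀ + g_mix g_fib⁻¹ B_mixᵀ, B̂_mix = g_mix g_fib⁻¹, and B̂_fib = 0; in particular ĝ is symmetric, B̂ is skew-symmetric with vanishing fibre block, and (g,B) and (ĝ,B̂) satisfy the Buscher rules. -/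
/-!
Positive definiteness makes `g_fib` invertible with symmetric inverse `G`. Expanding
`(g_mix + B_mix) * G * (g_mixᵀ - B_mixᵀ)`, the terms `g_mix * G * g_mixᵀ` and `B_mix * G * B_mixᵀ`
are symmetric, while the two cross terms are, up to sign, transposes of each other. Hence
`Q̂ + Q̂ᵀ` and `Q̂ - Q̂ᵀ` are blockwise of the form `X + X` with `X` the blocks in the Buscher rules.
-/

open Matrix

/-- The "dual" of a background matrix, written in blocks. -/
noncomputable def dualQ {s n : ℕ} (Q_bas : Matrix (Fin s) (Fin s) ℝ) (Q_mix : Matrix (Fin s) (Fin n) ℝ)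
    (Q'_mix : Matrix (Fin n) (Fin s) ℝ) (Q_fib : Matrix (Fin n) (Fin n) ℝ) :
    Matrix (Fin s ⊕ Fin n) (Fin s ⊕ Fin n) ℝ :=
  Matrix.fromBlocks (Q_bas - Q_mix * Q_fib⁻¹ * Q'_mix) (Q_mix * Q_fib⁻¹)
    (-(Q_fib⁻¹ * Q'_mix)) Q_fib⁻¹

/-- The Buscher rules for two Buscher pairs, written blockwise. -/
def BuscherRules {s n : ℕ}
    (g_bas B_bas ghat_bas Bhat_bas : Matrix (Fin s) (Fin s) ℝ)
    (g_mix B_mix ghat_mix Bhat_mix : Matrix (Fin s) (Fin n) ℝ)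
    (g_fib ghat_fib : Matrix (Fin n) (Fin n) ℝ) : Prop :=
  ghat_bas = g_bas - g_mix * g_fib⁻¹ * g_mixᵀ + B_mix * g_fib⁻¹ * B_mixᵀ ∧
  ghat_mix = B_mix * g_fib⁻¹ ∧
  ghat_fib = g_fib⁻¹ ∧
  Bhat_bas = B_bas - B_mix * g_fib⁻¹ * g_mixᵀ + g_mix * g_fib⁻¹ * B_mixᵀ ∧
  Bhat_mix = g_mix * g_fib⁻¹

/-- **Dualization of a Buscher pair.**  For a Buscher pair `(g,B)` the fibre block
`Q_fib = g_fib` is invertible, and the symmetric and antisymmetric parts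
`ĝ := (Q̂+Q̂ᵀ)/2`, `B̂ := (Q̂−Q̂ᵀ)/2` of the dual matrix `Q̂` are given by the stated
block formulas; in particular `ĝ` is symmetric, `B̂` is skew-symmetric with vanishing
fibre block, and `(g,B)`, `(ĝ,B̂)` satisfy the Buscher rules. -/
theorem statement1 (s n : ℕ)
    (g_bas B_bas : Matrix (Fin s) (Fin s) ℝ)
    (g_mix B_mix : Matrix (Fin s) (Fin n) ℝ)
    (g_fib : Matrix (Fin n) (Fin n) ℝ)
    (hgbas : g_basᵀ = g_bas) (hgfib : g_fib.PosDef)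
    (hg : (Matrix.fromBlocks g_bas g_mix g_mixᵀ g_fib).PosDef)
    (hBbas : B_basᵀ = -B_bas) :
    IsUnit g_fib.det ∧
    (let Qhat := dualQ (g_bas + B_bas) (g_mix + B_mix) (g_mixᵀ - B_mixᵀ) g_fib
     let ghat := ((1 : ℝ) / 2) • (Qhat + Qhatᵀ)
     let Bhat := ((1 : ℝ) / 2) • (Qhat - Qhatᵀ)
     ghat.toBlocks₁₁ = g_bas - g_mix * g_fib⁻¹ * g_mixᵀ + B_mix * g_fib⁻¹ * B_mixᵀ ∧
     ghat.toBlocks₁₂ = B_mix * g_fib⁻¹ ∧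
     ghat.toBlocks₂₂ = g_fib⁻¹ ∧
     Bhat.toBlocks₁₁ = B_bas - B_mix * g_fib⁻¹ * g_mixᵀ + g_mix * g_fib⁻¹ * B_mixᵀ ∧
     Bhat.toBlocks₁₂ = g_mix * g_fib⁻¹ ∧
     Bhat.toBlocks₂₂ = 0 ∧
     ghatᵀ = ghat ∧ Bhatᵀ = -Bhat ∧
     BuscherRules g_bas B_bas ghat.toBlocks₁₁ Bhat.toBlocks₁₁ g_mix B_mix ghat.toBlocks₁₂
       Bhat.toBlocks₁₂ g_fib ghat.toBlocks₂₂) := by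
  have hGT : (g_fib⁻¹)ᵀ = g_fib⁻¹ := by
    have h : g_fibᵀ = g_fib := by simpa using hgfib.isHermitian.eq
    rw [transpose_nonsing_inv, h]
  have half {l m : ℕ} (X : Matrix (Fin l) (Fin m) ℝ) : ((1 : ℝ) / 2) • (X + X) = X := by
    rw [← two_smul ℝ X, smul_smul]
    norm_num
  refine ⟨(isUnit_iff_isUnit_det _).1 hgfib.isUnit, ?_⟩
  intro Qhat ghat Bhat
  have hghat : ghat = fromBlocks
      (g_bas - g_mix * g_fib⁻¹ * g_mixᵀ + B_mix * g_fib⁻¹ * B_mixᵀ) (B_mix * g_fib⁻¹)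
      (g_fib⁻¹ * B_mixᵀ) g_fib⁻¹ := by
    simp only [ghat, Qhat, dualQ, fromBlocks_transpose, fromBlocks_add, fromBlocks_smul]
    congr 1
    all_goals
      refine Eq.trans (congrArg _ ?_) (half _)
      simp only [transpose_add, transpose_sub, transpose_neg, transpose_mul, transpose_transpose,
        hGT, hgbas, hBbas, Matrix.add_mul, Matrix.sub_mul, Matrix.mul_add, Matrix.mul_sub,
        Matrix.mul_assoc]
      try abel
  have hBhat : Bhat = fromBlocks
      (B_bas - B_mix * g_fib⁻¹ * g_mixᵀ + g_mix * g_fib⁻¹ * B_mixᵀ) (g_mix * g_fib⁻¹)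
      (-(g_fib⁻¹ * g_mixᵀ)) 0 := by
    simp only [Bhat, Qhat, dualQ, fromBlocks_transpose, sub_eq_add_neg, fromBlocks_neg,
      fromBlocks_add, fromBlocks_smul]
    congr 1
    all_goals
      refine Eq.trans (congrArg _ ?_) (half _)
      simp only [transpose_add, transpose_neg, transpose_mul, transpose_transpose,
        hGT, hgbas, hBbas, Matrix.add_mul, Matrix.mul_add, Matrix.neg_mul, Matrix.mul_neg,
        Matrix.mul_assoc]
      try abel
  have hsymm : ghatᵀ = ghat := by
    simp only [ghat, transpose_smul, transpose_add, transpose_transpose, add_comm]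
  have hskew : Bhatᵀ = -Bhat := by
    simp only [Bhat, transpose_smul, transpose_sub, transpose_transpose, ← smul_neg, neg_sub]
  refine ⟨?_, ?_, ?_, ?_, ?_, ?_, hsymm, hskew, ?_, ?_, ?_, ?_, ?_⟩ <;>
    simp only [hghat, hBhat, toBlocks_fromBlocks₁₁, toBlocks_fromBlocks₁₂, toBlocks_fromBlocks₂₂]
end

section
/- Let (g,B) be a Buscher pair of size (s,n) and define ĝ := fromBlocks (g_bas − g_mix g_fib⁻¹ g_mixᵀ + B_mix g_fib⁻¹ B_mixᵀ) (B_mix g_fib⁻¹) (g_fib⁻¹ B_mixᵀ) (g_fib⁻¹). Then ĝ is symmetric positive definite; consequently, with B̂ := fromBlocks (B_bas − B_mix g_fib⁻¹ g_mixᵀ + g_mix g_fib⁻¹ B_mixᵀ) (g_mix g_fib⁻¹) (−g_fib⁻¹ g_mixᵀ) 0, the pair (ĝ, B̂) is again a Buscher pair. -/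
/-!
Positive definiteness of a block matrix with positive-definite lower-right block `D` is equivalent
to positive definiteness of the Schur complement `A - B D⁻¹ Bᵀ`
(`posDef_fromBlocks_iff_schur`; Mathlib has the semidefinite version, and the determinant formula
supplies invertibility). The Schur complement of `g_fib⁻¹` in `ĝ` is
`(g_bas - g_mix g_fib⁻¹ g_mixᵀ + B_mix g_fib⁻¹ B_mixᵀ) - (B_mix g_fib⁻¹) g_fib (B_mix g_fib⁻¹)ᵀ`,
in which the `B_mix` terms cancel, leaving the Schur complement of `g_fib` in `g`. So `ĝ` is
positive definite because `g` is. Skew-symmetry of the base block of `B̂` holds because transposition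
swaps its two correction terms.
-/

open Matrix

/-- A Buscher pair `(g,B)` of size `(s,n)`, recorded through its blocks:
`g = fromBlocks g_bas g_mix g_mixᵀ g_fib` is positive definite with `g_bas` symmetric and
`g_fib` symmetric positive definite, and `B = fromBlocks B_bas B_mix (−B_mixᵀ) 0` is
skew-symmetric with `B_bas` skew-symmetric. -/
def IsBuscherPair {s n : ℕ} (g_bas B_bas : Matrix (Fin s) (Fin s) ℝ)
    (g_mix B_mix : Matrix (Fin s) (Fin n) ℝ) (g_fib : Matrix (Fin n) (Fin n) ℝ) : Prop :=
  g_basᵀ = g_bas ∧ g_fib.PosDef ∧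
    (Matrix.fromBlocks g_bas g_mix g_mixᵀ g_fib).PosDef ∧ B_basᵀ = -B_bas

/-- The Schur complement criterion for positive definiteness of a real block matrix. -/
theorem posDef_fromBlocks_iff_schur {s n : ℕ} (A : Matrix (Fin s) (Fin s) ℝ)
    (B : Matrix (Fin s) (Fin n) ℝ) {D : Matrix (Fin n) (Fin n) ℝ} (hD : D.PosDef) :
    (Matrix.fromBlocks A B Bᵀ D).PosDef ↔ (A - B * D⁻¹ * Bᵀ).PosDef := by
  letI : Invertible D := hD.isUnit.invertible
  have hpsd : (Matrix.fromBlocks A B Bᵀ D).PosSemidef ↔ (A - B * D⁻¹ * Bᵀ).PosSemidef := by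
    simpa only [conjTranspose_eq_transpose_of_trivial] using Matrix.PosDef.fromBlocks₂₂ A B hD
  have hdet : (Matrix.fromBlocks A B Bᵀ D).det = D.det * (A - B * D⁻¹ * Bᵀ).det := by
    rw [det_fromBlocks₂₂, invOf_eq_nonsing_inv]
  have hD0 : D.det ≠ 0 := hD.det_pos.ne'
  constructor
  · intro h
    rw [(hpsd.1 h.posSemidef).posDef_iff_det_ne_zero]
    exact right_ne_zero_of_mul (hdet ▸ h.det_pos.ne')
  · intro h
    rw [(hpsd.2 h.posSemidef).posDef_iff_det_ne_zero, hdet]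
    exact mul_ne_zero hD0 h.det_pos.ne'

/-- **The dual metric is positive definite.**  For a Buscher pair `(g,B)`, the matrix
`ĝ := fromBlocks (g_bas − g_mix g_fib⁻¹ g_mixᵀ + B_mix g_fib⁻¹ B_mixᵀ) (B_mix g_fib⁻¹)
(g_fib⁻¹ B_mixᵀ) g_fib⁻¹` is symmetric positive definite; consequently, with
`B̂ := fromBlocks (B_bas − B_mix g_fib⁻¹ g_mixᵀ + g_mix g_fib⁻¹ B_mixᵀ) (g_mix g_fib⁻¹)
(−g_fib⁻¹ g_mixᵀ) 0`, the pair `(ĝ,B̂)` is again a Buscher pair. -/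
theorem statement2 (s n : ℕ)
    (g_bas B_bas : Matrix (Fin s) (Fin s) ℝ) (g_mix B_mix : Matrix (Fin s) (Fin n) ℝ)
    (g_fib : Matrix (Fin n) (Fin n) ℝ)
    (h : IsBuscherPair g_bas B_bas g_mix B_mix g_fib) :
    (let ghat := Matrix.fromBlocks
        (g_bas - g_mix * g_fib⁻¹ * g_mixᵀ + B_mix * g_fib⁻¹ * B_mixᵀ)
        (B_mix * g_fib⁻¹) (g_fib⁻¹ * B_mixᵀ) g_fib⁻¹
     ghatᵀ = ghat ∧ ghat.PosDef) ∧
    g_fib⁻¹ * B_mixᵀ = (B_mix * g_fib⁻¹)ᵀ ∧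
    -(g_fib⁻¹ * g_mixᵀ) = -((g_mix * g_fib⁻¹)ᵀ) ∧
    IsBuscherPair
      (g_bas - g_mix * g_fib⁻¹ * g_mixᵀ + B_mix * g_fib⁻¹ * B_mixᵀ)
      (B_bas - B_mix * g_fib⁻¹ * g_mixᵀ + g_mix * g_fib⁻¹ * B_mixᵀ)
      (B_mix * g_fib⁻¹) (g_mix * g_fib⁻¹) g_fib⁻¹ := by
  obtain ⟨hbas, hfib, hg, hB⟩ := h
  have hfibT : g_fibᵀ = g_fib := by
    simpa only [conjTranspose_eq_transpose_of_trivial] using hfib.isHermitian.eq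
  have hinvT : (g_fib⁻¹)ᵀ = g_fib⁻¹ := by rw [transpose_nonsing_inv, hfibT]
  have hmix : ∀ M : Matrix (Fin s) (Fin n) ℝ, g_fib⁻¹ * Mᵀ = (M * g_fib⁻¹)ᵀ := fun M => by
    rw [transpose_mul, hinvT]
  have hdet : IsUnit g_fib.det := (isUnit_iff_isUnit_det _).1 hfib.isUnit
  have hbasT : (g_bas - g_mix * g_fib⁻¹ * g_mixᵀ + B_mix * g_fib⁻¹ * B_mixᵀ)ᵀ =
      g_bas - g_mix * g_fib⁻¹ * g_mixᵀ + B_mix * g_fib⁻¹ * B_mixᵀ := by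
    simp only [transpose_add, transpose_sub, transpose_mul, transpose_transpose, hinvT, hbas,
      Matrix.mul_assoc]
  have hpos : (Matrix.fromBlocks (g_bas - g_mix * g_fib⁻¹ * g_mixᵀ + B_mix * g_fib⁻¹ * B_mixᵀ)
      (B_mix * g_fib⁻¹) (B_mix * g_fib⁻¹)ᵀ g_fib⁻¹).PosDef := by
    rw [posDef_fromBlocks_iff_schur _ _ hfib.inv, nonsing_inv_nonsing_inv _ hdet,
      nonsing_inv_mul_cancel_right _ _ hdet, ← hmix, ← Matrix.mul_assoc, add_sub_cancel_right]
    exact (posDef_fromBlocks_iff_schur _ _ hfib).1 hg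
  refine ⟨⟨?_, ?_⟩, hmix _, congrArg _ (hmix _), hbasT, hfib.inv, hpos, ?_⟩
  · rw [fromBlocks_transpose, hbasT, hinvT, hmix, transpose_transpose]
  · rwa [hmix]
  · simp only [transpose_add, transpose_sub, transpose_mul, transpose_transpose, hinvT, hB,
      Matrix.mul_assoc]
    abel
end

section
/- Buscher dualization is involutive: let Q be a real (s+n)×(s+n) block matrix with blocks Q_bas (s×s), Q_mix (s×n), Q'_mix (n×s), Q_fib (n×n), where Q_fib is invertible, and define D(Q) := fromBlocks (Q_bas − Q_mix Q_fib⁻¹ Q'_mix) (Q_mix Q_fib⁻¹) (−Q_fib⁻¹ Q'_mix) Q_fib⁻¹. Then the fibre block Q_fib⁻¹ of D(Q) is invertible and D(D(Q)) = Q. In particular, for a Buscher pair (g,B) with background matrix Q = g + B, applying the dualization twice returns Q. -/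
open Matrix

/-- The identity holds block by block: since `(Q_fib⁻¹)⁻¹ = Q_fib`, the second dualization cancels
the factors `Q_fib⁻¹` in the mixed blocks, and it adds back to the base block exactly the term
`Q_mix * Q_fib⁻¹ * Q'_mix` that the first one subtracted. -/
theorem dualQ_dualQ {s n : ℕ} (Q_bas : Matrix (Fin s) (Fin s) ℝ)
    (Q_mix : Matrix (Fin s) (Fin n) ℝ) (Q'_mix : Matrix (Fin n) (Fin s) ℝ)
    (Q_fib : Matrix (Fin n) (Fin n) ℝ) (h : IsUnit Q_fib.det) :
    dualQ (Q_bas - Q_mix * Q_fib⁻¹ * Q'_mix) (Q_mix * Q_fib⁻¹) (-(Q_fib⁻¹ * Q'_mix)) Q_fib⁻¹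
      = Matrix.fromBlocks Q_bas Q_mix Q'_mix Q_fib := by
  have hmix : Q_mix * Q_fib⁻¹ * Q_fib = Q_mix := nonsing_inv_mul_cancel_right _ _ h
  have hmix' : Q_fib * (Q_fib⁻¹ * Q'_mix) = Q'_mix := mul_nonsing_inv_cancel_left _ _ h
  unfold dualQ
  rw [nonsing_inv_nonsing_inv _ h, hmix]
  simp only [Matrix.mul_neg, hmix', neg_neg, sub_neg_eq_add, ← Matrix.mul_assoc, sub_add_cancel]

/-- **Buscher dualization is involutive.**  If `Q_fib` is invertible then the fibre block
`Q_fib⁻¹` of `D(Q)` is invertible and `D(D(Q)) = Q`; in particular, for a Buscher pair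
`(g,B)` with background matrix `Q = g + B`, applying the dualization twice returns `Q`. -/
theorem statement3 (s n : ℕ) (Q_bas : Matrix (Fin s) (Fin s) ℝ)
    (Q_mix : Matrix (Fin s) (Fin n) ℝ) (Q'_mix : Matrix (Fin n) (Fin s) ℝ)
    (Q_fib : Matrix (Fin n) (Fin n) ℝ) (h : IsUnit Q_fib.det) :
    IsUnit (Q_fib⁻¹).det ∧
    dualQ (Q_bas - Q_mix * Q_fib⁻¹ * Q'_mix) (Q_mix * Q_fib⁻¹) (-(Q_fib⁻¹ * Q'_mix)) Q_fib⁻¹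
      = Matrix.fromBlocks Q_bas Q_mix Q'_mix Q_fib ∧
    (∀ (g_bas B_bas : Matrix (Fin s) (Fin s) ℝ) (g_mix B_mix : Matrix (Fin s) (Fin n) ℝ)
      (g_fib : Matrix (Fin n) (Fin n) ℝ), g_basᵀ = g_bas → g_fib.PosDef →
      (Matrix.fromBlocks g_bas g_mix g_mixᵀ g_fib).PosDef → B_basᵀ = -B_bas →
      dualQ ((g_bas + B_bas) - (g_mix + B_mix) * g_fib⁻¹ * (g_mixᵀ - B_mixᵀ))
          ((g_mix + B_mix) * g_fib⁻¹) (-(g_fib⁻¹ * (g_mixᵀ - B_mixᵀ))) g_fib⁻¹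
        = Matrix.fromBlocks (g_bas + B_bas) (g_mix + B_mix) (g_mixᵀ - B_mixᵀ) g_fib) := by
  refine ⟨isUnit_nonsing_inv_det _ h, dualQ_dualQ _ _ _ _ h, ?_⟩
  intro g_bas B_bas g_mix B_mix g_fib _ hfib _ _
  exact dualQ_dualQ _ _ _ _ hfib.det_pos.ne'.isUnit
end

section
/- Equivalence of the pair and quadruple forms of the Buscher rules: let g', ĝ' be symmetric positive-definite s×s real matrices, h, ĥ symmetric positive-definite n×n real matrices, A, Â real n×s matrices, B_bas, B̂_bas skew-symmetric s×s matrices and B_mix, B̂_mix real s×n matrices. Define g_bas := g' + Aᵀ h A, g_mix := Aᵀ h, g_fib := h and ĝ_bas := ĝ' + Âᵀ ĥ Â, ĝ_mix := Âᵀ ĥ, ĝ_fib := ĥ. Then the five equations ĝ_bas = g_bas − g_mix g_fib⁻¹ g_mixᵀ + B_mix g_fib⁻¹ B_mixᵀ, ĝ_mix = B_mix g_fib⁻¹, ĝ_fib = g_fib⁻¹, B̂_bas = B_bas − B_mix g_fib⁻¹ g_mixᵀ + g_mix g_fib⁻¹ B_mixᵀ, B̂_mix = g_mix g_fib⁻¹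 hold if and only if the five equations ĝ' = g', Âᵀ = B_mix, ĥ = h⁻¹, B̂_bas = B_bas − B_mix A + (B_mix A)ᵀ, B̂_mix = Aᵀ hold. -/
/-!
Since `h` is positive definite, it is symmetric and invertible, so `Aᵀ h h⁻¹ = Aᵀ` and
`(Aᵀ h)ᵀ = h A`. The horizontal term `Aᵀ h A` then cancels from the first pair equation, and the
two equations for the hatted `B`-field blocks become literally those of the quadruple form.
Given `ĥ = h⁻¹`, the mixed equation `Âᵀ ĥ = B_mix h⁻¹` is equivalent to `Âᵀ = B_mix`, which makes
`Âᵀ ĥ Â` equal to `B_mix h⁻¹ B_mixᵀ`, so that the first equation reduces to `ĝ' = g'`.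
-/

open Matrix

/-- **Equivalence of the pair and quadruple forms of the Buscher rules.**  With Kaluza–Klein
blocks `g_bas := g' + Aᵀ h A`, `g_mix := Aᵀ h`, `g_fib := h` (and dually with hats), the five
Buscher-rule equations for the pairs hold iff the five equations for the quadruples hold. -/
theorem statement4 (s n : ℕ)
    (g' ghat' : Matrix (Fin s) (Fin s) ℝ) (h hhat : Matrix (Fin n) (Fin n) ℝ)
    (A Ahat : Matrix (Fin n) (Fin s) ℝ)
    (Bbas Bhatbas : Matrix (Fin s) (Fin s) ℝ) (Bmix Bhatmix : Matrix (Fin s) (Fin n) ℝ)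
    (hg' : g'.PosDef) (hghat' : ghat'.PosDef) (hh : h.PosDef) (hhhat : hhat.PosDef)
    (hB : Bbasᵀ = -Bbas) (hBhat : Bhatbasᵀ = -Bhatbas) :
    (ghat' + Ahatᵀ * hhat * Ahat =
        (g' + Aᵀ * h * A) - (Aᵀ * h) * h⁻¹ * (Aᵀ * h)ᵀ + Bmix * h⁻¹ * Bmixᵀ ∧
      Ahatᵀ * hhat = Bmix * h⁻¹ ∧
      hhat = h⁻¹ ∧
      Bhatbas = Bbas - Bmix * h⁻¹ * (Aᵀ * h)ᵀ + (Aᵀ * h) * h⁻¹ * Bmixᵀ ∧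
      Bhatmix = (Aᵀ * h) * h⁻¹)
    ↔
    (ghat' = g' ∧ Ahatᵀ = Bmix ∧ hhat = h⁻¹ ∧
      Bhatbas = Bbas - Bmix * A + (Bmix * A)ᵀ ∧
      Bhatmix = Aᵀ) := by
  have hu : IsUnit h.det := (Matrix.isUnit_iff_isUnit_det h).mp hh.isUnit
  have hT : hᵀ = h := by
    have := hh.isHermitian.eq
    rwa [conjTranspose_eq_transpose_of_trivial] at this
  have e1 : Aᵀ * h * h⁻¹ = Aᵀ := mul_nonsing_inv_cancel_right _ _ hu
  have e2 : (Aᵀ * h)ᵀ = h * A := by rw [transpose_mul, transpose_transpose, hT]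
  have e3 : Bmix * h⁻¹ * (h * A) = Bmix * A := by
    rw [Matrix.mul_assoc, nonsing_inv_mul_cancel_left _ _ hu]
  have e4 : Aᵀ * (h * A) = Aᵀ * h * A := (Matrix.mul_assoc _ _ _).symm
  rw [e1, e2, e3, e4, add_sub_cancel_right, transpose_mul]
  constructor
  · rintro ⟨h1, h2, h3, h4, h5⟩
    have hA : Ahatᵀ = Bmix := by
      have := congrArg (· * h) h2
      simpa only [h3, nonsing_inv_mul_cancel_right _ _ hu] using this
    refine ⟨?_, hA, h3, h4, h5⟩
    rw [h2, ← hA, transpose_transpose] at h1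
    exact add_right_cancel h1
  · rintro ⟨h1, h2, h3, h4, h5⟩
    refine ⟨?_, by rw [h2, h3], h3, h4, h5⟩
    rw [h1, h3, ← h2, transpose_transpose]
end

section
/- For integer vectors m, m̂ ∈ ℤⁿ, the map ρ_{m,m̂} is multiplication by the function f_{m,m̂}(a,â) = m⋅â − m̂⋅a: for all a, â ∈ ℝⁿ and t ∈ T, ρ_{m,m̂}([a, â, t]) = [a, â, t + ↑(m⋅â − m̂⋅a)]. -/
open Matrix

noncomputable section

/-- The circle `T = ℝ/ℤ`. -/
abbrev Tc : Type := AddCircle (1 : ℝ)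

/-- Componentwise inclusion `ℤⁿ → ℝⁿ`. -/
def zc {n : ℕ} (m : Fin n → ℤ) : Fin n → ℝ := fun i => (m i : ℝ)

/-- The Poincaré relation on `ℝⁿ × ℝⁿ × T`:
`(a,â,t) ~ (a+m, â+m̂, t+↑(m⋅â))` for `m, m̂ ∈ ℤⁿ`. -/
def PoincareRel (n : ℕ) (p q : (Fin n → ℝ) × (Fin n → ℝ) × Tc) : Prop :=
  ∃ m mhat : Fin n → ℤ,
    q.1 = p.1 + zc m ∧ q.2.1 = p.2.1 + zc mhat ∧
      q.2.2 = p.2.2 + ((dotProduct (zc m) p.2.1 : ℝ) : Tc)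

/-- The total space `P` of the Poincaré bundle: the quotient of `ℝⁿ × ℝⁿ × T`
by the Poincaré relation. -/
def PB (n : ℕ) : Type := Quot (PoincareRel n)

/-- The class `[a, â, t]` in `P`. -/
def mk3 {n : ℕ} (a ahat : Fin n → ℝ) (t : Tc) : PB n := Quot.mk _ (a, ahat, t)

/-- The circle action on `P`: `[a, â, t] + s := [a, â, t + s]` (well defined). -/
def PBadd {n : ℕ} (p : PB n) (s : Tc) : PB n :=
  Quot.lift (fun q => mk3 q.1 q.2.1 (q.2.2 + s))
    (fun r r' h => by
      obtain ⟨m, mhat, h1, h2, h3⟩ := h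
      refine Quot.sound ⟨m, mhat, h1, h2, ?_⟩
      show r'.2.2 + s = r.2.2 + s + ((dotProduct (zc m) r.2.1 : ℝ) : Tc)
      rw [h3]; abel)
    p

/-- `ρ_{x,x̂}` is the map induced on `P` by
`(b, b̂, t) ↦ (b − x, b̂ − x̂, t − ↑((b−x)⋅x̂))`. -/
def IsRho {n : ℕ} (x xhat : Fin n → ℝ) (rho : PB n → PB n) : Prop :=
  ∀ (b bhat : Fin n → ℝ) (t : Tc),
    rho (mk3 b bhat t) =
      mk3 (b - x) (bhat - xhat) (t - ((dotProduct (b - x) xhat : ℝ) : Tc))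

/-- For integer vectors `m, m̂ ∈ ℤⁿ` the map `ρ_{m,m̂}` is multiplication
by the function `f_{m,m̂}(a,â) = m⋅â − m̂⋅a`:
`ρ_{m,m̂}([a, â, t]) = [a, â, t + ↑(m⋅â − m̂⋅a)]`. -/
theorem statement7 (n : ℕ) (m mhat : Fin n → ℤ) (rho : PB n → PB n)
    (h : IsRho (zc m) (zc mhat) rho) :
    ∀ (a ahat : Fin n → ℝ) (t : Tc),
      rho (mk3 a ahat t) =
        mk3 a ahat (t + ((dotProduct (zc m) ahat - dotProduct (zc mhat) a : ℝ) : Tc)) := by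
  intro a ahat t
  rw [h a ahat t]
  -- Translating the representative `(a - m, â - m̂, _)` back by `(m, m̂)` multiplies the fibre
  -- by `m⋅(â - m̂)`, and the two `m⋅m̂` terms cancel exactly in `ℝ`.
  refine Quot.sound ⟨m, mhat, (sub_add_cancel _ _).symm, (sub_add_cancel _ _).symm, ?_⟩
  have key : dotProduct (zc m) ahat - dotProduct (zc mhat) a =
      -dotProduct (a - zc m) (zc mhat) + dotProduct (zc m) (ahat - zc mhat) := by
    rw [sub_dotProduct, dotProduct_sub, dotProduct_comm a (zc mhat)]
    ring
  change t + _ = t - _ + _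
  rw [key, AddCircle.coe_add, AddCircle.coe_neg]
  abel
end
end

section
/- Skew-symmetry of the Poincaré bundle: the map (a, â, t) ↦ (â, a, ↑(a⋅â) − t) descends to a well-defined map λ : P → P; λ is an involution (λ ∘ λ = id), it is anti-equivariant for the circle action (λ(p + s) = λ(p) − s for all p ∈ P, s ∈ T), and it exchanges the two canonical sections: λ([a, â, 0]) = [â, a, ↑(â⋅a)] for all a, â ∈ ℝⁿ. -/
open Matrix

noncomputable section

/-- The dot product of two integer vectors vanishes in `ℝ/ℤ`. This is the only obstruction
to `(a, â, t) ↦ (â, a, ↑(a⋅â) − t)` respecting the Poincaré relation: translating `(a, â)` by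
`(m, m̂)` changes the last coordinate by `↑(m̂⋅a) + ↑(m⋅m̂)`, where the relation asks for
`↑(m̂⋅a)`. -/
lemma coe_zc_dotProduct_zc {n : ℕ} (m k : Fin n → ℤ) :
    ((dotProduct (zc m) (zc k) : ℝ) : Tc) = 0 := by
  rw [AddCircle.coe_eq_zero_iff]
  exact ⟨dotProduct m k, by simp [dotProduct, zc]⟩

/-- **skew-symmetry of the Poincaré bundle.**  The map
`(a, â, t) ↦ (â, a, ↑(a⋅â) − t)` descends to a well-defined map `λ : P → P`; it is an
involution, anti-equivariant for the circle action, and exchanges the two canonical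
sections: `λ([a, â, 0]) = [â, a, ↑(â⋅a)]`. -/
theorem statement8 (n : ℕ) :
    ∃ lam : PB n → PB n,
      (∀ (a ahat : Fin n → ℝ) (t : Tc),
        lam (mk3 a ahat t) = mk3 ahat a (((dotProduct a ahat : ℝ) : Tc) - t)) ∧
      (∀ p : PB n, lam (lam p) = p) ∧
      (∀ (p : PB n) (s : Tc), lam (PBadd p s) = PBadd (lam p) (-s)) ∧
      (∀ a ahat : Fin n → ℝ,
        lam (mk3 a ahat 0) = mk3 ahat a ((dotProduct ahat a : ℝ) : Tc)) := by
  refine ⟨Quot.lift (fun q => mk3 q.2.1 q.1 (((dotProduct q.1 q.2.1 : ℝ) : Tc) - q.2.2)) ?_,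
    fun _ _ _ => rfl, ?_, ?_, ?_⟩
  · rintro ⟨a, b, t⟩ ⟨a', b', t'⟩ ⟨m, k, h1, h2, h3⟩
    dsimp only at h1 h2 h3
    subst h1 h2 h3
    refine Quot.sound ⟨k, m, rfl, rfl, ?_⟩
    dsimp only
    rw [add_dotProduct, dotProduct_add, dotProduct_add, dotProduct_comm (zc k) a]
    simp only [AddCircle.coe_add, coe_zc_dotProduct_zc]
    abel
  · rintro ⟨a, b, t⟩
    change mk3 a b (((dotProduct b a : ℝ) : Tc) - (((dotProduct a b : ℝ) : Tc) - t)) = mk3 a b t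
    rw [dotProduct_comm b a, sub_sub_cancel]
  · rintro ⟨a, b, t⟩ s
    change mk3 b a (((dotProduct a b : ℝ) : Tc) - (t + s))
      = mk3 b a (((dotProduct a b : ℝ) : Tc) - t + -s)
    congr 1
    abel
  · intro a b
    change mk3 b a (((dotProduct a b : ℝ) : Tc) - 0) = _
    rw [sub_zero, dotProduct_comm]
end
end

section
/- Compatibility pentagon for the Poincaré bundle multiplications: for all p₁₃, p₁₄, p₂₃, p₂₄ ∈ P with π₂(p₁₃) = π₂(p₂₃), π₂(p₁₄) = π₂(p₂₄), π₁(p₁₃) = π₁(p₁₄) and π₁(p₂₃) = π₁(p₂₄), one has Φ_r(Φ_l(p₁₃, p₂₃), Φ_l(p₁₄, p₂₄)) = Φ_l(Φ_r(p₁₃, p₁₄), Φ_r(p₂₃, p₂₄)), both sides being defined because π₁ and π₂ are additive resp. invariant under Φ_l and Φ_r. -/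
/-!
The identity is immediate once the four points are written over common real lifts of their base points:
if `p₁₃ = [a, c, t₁₃]`, `p₁₄ = [a, d, t₁₄]`, `p₂₃ = [b, c, t₂₃]`, `p₂₄ = [b, d, t₂₄]`, then both
sides equal `[a + b, c + d, t₁₃ + t₁₄ + t₂₃ + t₂₄]`. Such representatives exist because the matching
hypotheses on the projections allow the same lifts to be used for each shared base coordinate, and
`exists_mk3_of_proj` says that any lifts of `π₁ p` and `π₂ p` occur in a representative of `p`.
-/

open Matrix

noncomputable section

lemma coe_int_eq_zero (k : ℤ) : ((k : ℝ) : Tc) = 0 :=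
  (AddCircle.coe_eq_zero_iff (1 : ℝ)).mpr ⟨k, by simp⟩

/-- Projection `π₁ : P → Tⁿ` remembering the first `ℝⁿ`-coordinate. -/
def proj1 {n : ℕ} : PB n → (Fin n → Tc) :=
  Quot.lift (fun p => fun i => ((p.1 i : ℝ) : Tc))
    (fun r r' h => by
      obtain ⟨m, mhat, h1, h2, h3⟩ := h
      show (fun i => ((r.1 i : ℝ) : Tc)) = fun i => ((r'.1 i : ℝ) : Tc)
      funext i
      have hq : r'.1 i = r.1 i + (m i : ℝ) := by rw [h1]; rfl
      rw [hq, AddCircle.coe_add, coe_int_eq_zero, add_zero])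

/-- Projection `π₂ : P → Tⁿ` remembering the second `ℝⁿ`-coordinate. -/
def proj2 {n : ℕ} : PB n → (Fin n → Tc) :=
  Quot.lift (fun p => fun i => ((p.2.1 i : ℝ) : Tc))
    (fun r r' h => by
      obtain ⟨m, mhat, h1, h2, h3⟩ := h
      show (fun i => ((r.2.1 i : ℝ) : Tc)) = fun i => ((r'.2.1 i : ℝ) : Tc)
      funext i
      have hq : r'.2.1 i = r.2.1 i + (mhat i : ℝ) := by rw [h2]; rfl
      rw [hq, AddCircle.coe_add, coe_int_eq_zero, add_zero])

/-- The defining property of the left multiplication `Φ_l` of the Poincaré bundle,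
defined on pairs with equal second projection:
`Φ_l([a, c, t], [b, c, s]) = [a + b, c, s + t]`. -/
def IsPhiL (n : ℕ) (Phi : (p : PB n) → (q : PB n) → proj2 p = proj2 q → PB n) : Prop :=
  ∀ (a b c : Fin n → ℝ) (t s : Tc) (h : proj2 (mk3 a c t) = proj2 (mk3 b c s)),
    Phi (mk3 a c t) (mk3 b c s) h = mk3 (a + b) c (s + t)

/-- The defining property of the right multiplication `Φ_r` of the Poincaré bundle,
defined on pairs with equal first projection:
`Φ_r([a, b, t], [a, c, s]) = [a, b + c, s + t]`. -/
def IsPhiR (n : ℕ) (Phi : (p : PB n) → (q : PB n) → proj1 p = proj1 q → PB n) : Prop :=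
  ∀ (a b c : Fin n → ℝ) (t s : Tc) (h : proj1 (mk3 a b t) = proj1 (mk3 a c s)),
    Phi (mk3 a b t) (mk3 a c s) h = mk3 a (b + c) (s + t)

lemma exists_eq_add_zc {n : ℕ} {a a' : Fin n → ℝ}
    (h : (fun i => ((a' i : ℝ) : Tc)) = fun i => ((a i : ℝ) : Tc)) :
    ∃ m : Fin n → ℤ, a = a' + zc m := by
  have h' : ∀ i, ∃ k : ℤ, a i = a' i + (k : ℝ) := fun i => by
    have hi : ((a i - a' i : ℝ) : Tc) = 0 := by
      rw [AddCircle.coe_sub, sub_eq_zero]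
      exact (congrFun h i).symm
    obtain ⟨k, hk⟩ := (AddCircle.coe_eq_zero_iff (1 : ℝ)).mp hi
    refine ⟨k, ?_⟩
    rw [zsmul_eq_mul, mul_one] at hk
    linarith
  choose m hm using h'
  exact ⟨m, funext hm⟩

/-- The fibre of `(π₁, π₂)` over the class of `(a, c)` is exhausted by the points `[a, c, t]`,
whichever lifts `a` and `c` are chosen. -/
lemma exists_mk3_of_proj {n : ℕ} (p : PB n) (a c : Fin n → ℝ)
    (h1 : proj1 p = fun i => ((a i : ℝ) : Tc)) (h2 : proj2 p = fun i => ((c i : ℝ) : Tc)) :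
    ∃ t : Tc, p = mk3 a c t := by
  induction p using Quot.ind with
  | mk r =>
    obtain ⟨m, hm⟩ := exists_eq_add_zc h1
    obtain ⟨mhat, hmhat⟩ := exists_eq_add_zc h2
    exact ⟨r.2.2 + ((dotProduct (zc m) r.2.1 : ℝ) : Tc), Quot.sound ⟨m, mhat, hm, hmhat, rfl⟩⟩

/-- **compatibility pentagon for the Poincaré bundle multiplications.**
For `p₁₃, p₁₄, p₂₃, p₂₄ ∈ P` with matching projections,
`Φ_r(Φ_l(p₁₃,p₂₃), Φ_l(p₁₄,p₂₄)) = Φ_l(Φ_r(p₁₃,p₁₄), Φ_r(p₂₃,p₂₄))`. -/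
theorem statement13 (n : ℕ)
    (PhiL : (p : PB n) → (q : PB n) → proj2 p = proj2 q → PB n) (hL : IsPhiL n PhiL)
    (PhiR : (p : PB n) → (q : PB n) → proj1 p = proj1 q → PB n) (hR : IsPhiR n PhiR)
    (p13 p14 p23 p24 : PB n)
    (h23 : proj2 p13 = proj2 p23) (h24 : proj2 p14 = proj2 p24)
    (h13 : proj1 p13 = proj1 p14) (h13' : proj1 p23 = proj1 p24)
    (hr : proj1 (PhiL p13 p23 h23) = proj1 (PhiL p14 p24 h24))
    (hl : proj2 (PhiR p13 p14 h13) = proj2 (PhiR p23 p24 h13')) :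
    PhiR (PhiL p13 p23 h23) (PhiL p14 p24 h24) hr =
      PhiL (PhiR p13 p14 h13) (PhiR p23 p24 h13') hl := by
  obtain ⟨⟨a, c, t13⟩, rfl⟩ : ∃ r : (Fin n → ℝ) × (Fin n → ℝ) × Tc, mk3 r.1 r.2.1 r.2.2 = p13 :=
    Quot.exists_rep p13
  obtain ⟨⟨b, d, t24⟩, rfl⟩ : ∃ r : (Fin n → ℝ) × (Fin n → ℝ) × Tc, mk3 r.1 r.2.1 r.2.2 = p24 :=
    Quot.exists_rep p24
  obtain ⟨t14, rfl⟩ := exists_mk3_of_proj p14 a d h13.symm h24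
  obtain ⟨t23, rfl⟩ := exists_mk3_of_proj p23 b c h13' h23.symm
  dsimp only at *
  simp only [hL a b c t13 t23, hL a b d t14 t24, hR a c d t13 t14, hR b c d t23 t24,
    hR (a + b) c d, hL a b (c + d)]
  congr 1
  abel
end
end

section
/- Separation of the third-order Buscher rule: let X be a set, n : ℕ, let c, ĉ : X → Tⁿ → T, let a_ij, â_jk, â_ik : X → ℝⁿ and m, m̂ ∈ ℤⁿ, and assume that for all x ∈ X and all a, â ∈ Tⁿ: ĉ x â + ↑(m⋅(â_ik x)) + ⟪m, â⟫ = c x a + ⟪m̂, a⟫ − ↑((a_ij x)⋅(â_jk x)). Then there is a function t : X → T with −ĉ x â − ↑(m⋅(â_ik x)) − ⟪m, â⟫ = t x = −c x a − ⟪m̂, a⟫ + ↑((a_ij x)⋅(â_jk x)) for all x, a, â; in particular the equivariance rules c x (a + a') = c x a − ⟪m̂, a'⟫ and ĉ x (â + â') = ĉ x â − ⟪m, â'⟫ hold for all a, a', â, â' ∈ Tⁿ. -/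
open Matrix

noncomputable section

/-- The pairing `⟪m, a⟫ := ∑ i, mᵢ • aᵢ ∈ T` of `m ∈ ℤⁿ` with `a ∈ Tⁿ`. -/
def zpair {n : ℕ} (m : Fin n → ℤ) (a : Fin n → Tc) : Tc := ∑ i, m i • a i

theorem zpair_add {n : ℕ} (m : Fin n → ℤ) (a b : Fin n → Tc) :
    zpair m (a + b) = zpair m a + zpair m b := by
  simp [zpair, Finset.sum_add_distrib]

/-- **separation of the third-order Buscher rule.**  If
`ĉ x â + ↑(m⋅â_ik x) + ⟪m, â⟫ = c x a + ⟪m̂, a⟫ − ↑(a_ij x ⋅ â_jk x)` holds for all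
`x, a, â`, then there is `t : X → T` equal to both (constant) sides, and the equivariance
rules `c x (a+a') = c x a − ⟪m̂, a'⟫` and `ĉ x (â+â') = ĉ x â − ⟪m, â'⟫` hold. -/
theorem statement14 {X : Type*} (n : ℕ) (c chat : X → (Fin n → Tc) → Tc)
    (aij ahatjk ahatik : X → Fin n → ℝ) (m mhat : Fin n → ℤ)
    (H : ∀ (x : X) (a ahat : Fin n → Tc),
      chat x ahat + ((dotProduct (zc m) (ahatik x) : ℝ) : Tc) + zpair m ahat =
        c x a + zpair mhat a - ((dotProduct (aij x) (ahatjk x) : ℝ) : Tc)) :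
    ∃ t : X → Tc,
      (∀ (x : X) (a ahat : Fin n → Tc),
        (-chat x ahat - ((dotProduct (zc m) (ahatik x) : ℝ) : Tc) - zpair m ahat = t x) ∧
        (t x = -c x a - zpair mhat a + ((dotProduct (aij x) (ahatjk x) : ℝ) : Tc))) ∧
      (∀ (x : X) (a a' : Fin n → Tc), c x (a + a') = c x a - zpair mhat a') ∧
      (∀ (x : X) (ahat ahat' : Fin n → Tc),
        chat x (ahat + ahat') = chat x ahat - zpair m ahat') := by
  -- The left side of `H` depends on `ahat` only and the right side on `a` only, so both are
  -- constant in `a` and `ahat`; `t x` is minus the common value, read off at `ahat = 0`.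
  refine ⟨fun x => -chat x 0 - ((dotProduct (zc m) (ahatik x) : ℝ) : Tc) - zpair m 0,
    fun x a ahat => ⟨?_, ?_⟩, fun x a a' => ?_, fun x ahat ahat' => ?_⟩
  · beta_reduce
    linear_combination (norm := abel) H x 0 0 - H x 0 ahat
  · beta_reduce
    linear_combination (norm := abel) -H x a 0
  · have h := zpair_add mhat a a'
    linear_combination (norm := abel) H x a 0 - H x (a + a') 0 - h
  · have h := zpair_add m ahat ahat'
    linear_combination (norm := abel) H x 0 (ahat + ahat') - H x 0 ahat - h
end
end

section
/- Separation of the equivalence condition for T-duality cocycles: let X be a set, n : ℕ, let d, d̂ : X → Tⁿ → T, let p, p̂₁, p̂₂, a, â' : X → ℝⁿ and z, ẑ ∈ ℤⁿ, and assume that for all x ∈ X and all u, û ∈ Tⁿ: d x u + ⟪ẑ, u⟫ − ↑(z⋅(p̂₁ x + â' x)) + ↑((â' x)⋅(p x)) = d̂ x û + ⟪z, û⟫ + ↑((p̂₂ x)⋅(a x)). Then there is a function e : X → T with −d x u − ⟪ẑ, u⟫ + ↑(z⋅(p̂₁ x + â' x)) − ↑((â' x)⋅(p x)) = e x = −d̂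 x û − ⟪z, û⟫ − ↑((p̂₂ x)⋅(a x)) for all x, u, û; in particular d x (u + u') = d x u − ⟪ẑ, u'⟫ and d̂ x (û + û') = d̂ x û − ⟪z, û'⟫ for all u, u', û, û' ∈ Tⁿ. -/
/-!
For fixed `x`, the left side of the hypothesis depends only on `u` and the right side only on `û`,
so both are constant; `e x` is minus the common value. Comparing the hypothesis at `u + u'` and at
`u` (respectively `û + û'` and `û`), the constant terms cancel, and additivity of the pairing in its
second argument (`zpair_add` in the proof) gives the two equivariance rules.
-/

open Matrix

noncomputable section

/-- **separation of the equivalence condition for T-duality cocycles.**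
If `d x u + ⟪ẑ, u⟫ − ↑(z⋅(p̂₁ x + â' x)) + ↑(â' x ⋅ p x) = d̂ x û + ⟪z, û⟫ + ↑(p̂₂ x ⋅ a x)`
holds for all `x, u, û`, then there is `e : X → T` equal to both (constant) sides, and the
equivariance rules `d x (u+u') = d x u − ⟪ẑ, u'⟫` and `d̂ x (û+û') = d̂ x û − ⟪z, û'⟫`
hold. -/
theorem statement15 {X : Type*} (n : ℕ) (d dhat : X → (Fin n → Tc) → Tc)
    (p phat1 phat2 a ahat' : X → Fin n → ℝ) (z zhat : Fin n → ℤ)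
    (H : ∀ (x : X) (u uhat : Fin n → Tc),
      d x u + zpair zhat u - ((dotProduct (zc z) (phat1 x + ahat' x) : ℝ) : Tc) +
          ((dotProduct (ahat' x) (p x) : ℝ) : Tc) =
        dhat x uhat + zpair z uhat + ((dotProduct (phat2 x) (a x) : ℝ) : Tc)) :
    ∃ e : X → Tc,
      (∀ (x : X) (u uhat : Fin n → Tc),
        (-d x u - zpair zhat u + ((dotProduct (zc z) (phat1 x + ahat' x) : ℝ) : Tc) -
            ((dotProduct (ahat' x) (p x) : ℝ) : Tc) = e x) ∧
        (e x = -dhat x uhat - zpair z uhat - ((dotProduct (phat2 x) (a x) : ℝ) : Tc))) ∧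
      (∀ (x : X) (u u' : Fin n → Tc), d x (u + u') = d x u - zpair zhat u') ∧
      (∀ (x : X) (uhat uhat' : Fin n → Tc),
        dhat x (uhat + uhat') = dhat x uhat - zpair z uhat') := by
  have zpair_add : ∀ (m : Fin n → ℤ) (v w : Fin n → Tc),
      zpair m (v + w) = zpair m v + zpair m w := fun m v w => by
    simp [zpair, smul_add, Finset.sum_add_distrib]
  -- The common value is read off from the right side at `uhat = 0`.
  refine ⟨fun x => -(dhat x 0 + zpair z 0 + ((dotProduct (phat2 x) (a x) : ℝ) : Tc)),
    fun x u uhat => ⟨?_, ?_⟩, fun x u u' => ?_, fun x uhat uhat' => ?_⟩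
  · beta_reduce
    rw [← H x u 0]
    abel
  · beta_reduce
    rw [← H x 0 0, H x 0 uhat]
    abel
  · have h := (H x (u + u') 0).trans (H x u 0).symm
    rw [add_left_inj, sub_left_inj, zpair_add] at h
    rw [eq_sub_iff_add_eq, ← add_right_cancel_iff (a := zpair zhat u), ← h]
    abel
  · have h := (H x 0 (uhat + uhat')).symm.trans (H x 0 uhat)
    rw [add_left_inj, zpair_add] at h
    rw [eq_sub_iff_add_eq, ← add_right_cancel_iff (a := zpair z uhat), ← h]
    abel
end
end

section
/- Reconstruction gluing identity for the correspondence isomorphism: let n : ℕ, let a_ij, â_ij, â_jk, â_ik ∈ ℝⁿ and m_ijk, m̂_ijk ∈ ℤⁿ satisfy â_ik = m̂_ijk + â_ij + â_jk. For v ∈ ℝⁿ define z_v(a, â, m) := ↑(m⋅â + v⋅m + v⋅a) ∈ T for a, â ∈ ℝⁿ and m ∈ ℤⁿ. Then for all a, â ∈ ℝⁿ and all m₂, m̂₂, m₃ ∈ ℤⁿ: z_{â_ij}(a, â, m₂) + z_{â_jk}(a_ij + a + m₂, â_ij + â + m̂₂, m_ijk + m₃ − m₂) − z_{â_ik}(a,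 â, m₃) = ↑(m_ijk⋅(â_ik + â) + â_jk⋅a_ij − m̂_ijk⋅a). -/
open Matrix

noncomputable section

/-- The local transition function `z_v(a, â, m) := ↑(m⋅â + v⋅m + v⋅a) ∈ T`. -/
def zfun {n : ℕ} (v a ahat : Fin n → ℝ) (m : Fin n → ℤ) : Tc :=
  ((dotProduct (zc m) ahat + dotProduct v (zc m) + dotProduct v a : ℝ) : Tc)

/-- **reconstruction gluing identity for the correspondence isomorphism.**
If `â_ik = m̂_ijk + â_ij + â_jk` then for all `a, â ∈ ℝⁿ` and `m₂, m̂₂, m₃ ∈ ℤⁿ`: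
`z_{â_ij}(a, â, m₂) + z_{â_jk}(a_ij + a + m₂, â_ij + â + m̂₂, m_ijk + m₃ − m₂)
  − z_{â_ik}(a, â, m₃) = ↑(m_ijk⋅(â_ik + â) + â_jk⋅a_ij − m̂_ijk⋅a)`. -/
theorem statement16 (n : ℕ) (aij ahatij ahatjk ahatik : Fin n → ℝ)
    (mijk mhatijk : Fin n → ℤ)
    (h : ahatik = zc mhatijk + ahatij + ahatjk) :
    ∀ (a ahat : Fin n → ℝ) (m2 mhat2 m3 : Fin n → ℤ),
      zfun ahatij a ahat m2 +
          zfun ahatjk (aij + a + zc m2) (ahatij + ahat + zc mhat2) (mijk + m3 - m2) -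
          zfun ahatik a ahat m3 =
        ((dotProduct (zc mijk) (ahatik + ahat) + dotProduct ahatjk aij -
            dotProduct (zc mhatijk) a : ℝ) : Tc) := by
  subst h
  intro a ahat m2 mhat2 m3
  unfold zfun
  rw [← AddCircle.coe_add, ← AddCircle.coe_sub, ← sub_eq_zero, ← AddCircle.coe_sub,
    AddCircle.coe_eq_zero_iff]
  -- The two real representatives differ by `(m_ijk + m₃ - m₂)⋅m̂₂ - m̂_ijk⋅(m_ijk + m₃) ∈ ℤ`.
  refine ⟨∑ i, ((mijk i + m3 i - m2 i) * mhat2 i - mhatijk i * (mijk i + m3 i)), ?_⟩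
  simp only [zsmul_eq_mul, mul_one, dotProduct, zc, Pi.add_apply, Pi.sub_apply, Int.cast_sum,
    ← Finset.sum_add_distrib, ← Finset.sum_sub_distrib]
  refine Finset.sum_congr rfl fun i _ => ?_
  push_cast
  ring
end
end
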